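/- For every N ≥ 1 there is a constant C₂ = C₂(N) > 0 such that for every τ₀ > 0, every u₀ ∈ VT₁⁺(τ₀), and the heat flow U(t,·) = H_t u₀: (i) for all t ≥ 0 and x ∈ ℝ^N, U(t,x) + τ₀^{1/2} |∇U(t,x)| ≤ C₂ τ₀^{-N/2}; and (ii) for all t > 0 and x ∈ ℝ^N, |∇²U(t,x)| ≤ C₂ τ₀^{-1} t^{-N/2}. -/

import Mathlib

open MeasureTheory Filter Metric
open scoped ENNReal NNReal Topology

noncomputable section

/-- Euclidean space `ℝ^N`. -/
abbrev E (N : ℕ) : Type := EuclideanSpace ℝ (Fin N)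

/-- The Euclidean heat kernel `H(t,x,y) = (4πt)^{-N/2} exp(-|x-y|²/(4t))`. -/
def heatKernel (N : ℕ) (t : ℝ) (x y : E N) : ℝ :=
  (4 * Real.pi * t) ^ (-(N : ℝ) / 2) * Real.exp (-‖x - y‖ ^ 2 / (4 * t))

/-- The heat flow `(H_t u₀)(x) = ∫ u₀(y) H(t,x,y) dy`, with `H_0 u₀ = u₀`. -/
def heatFlow (N : ℕ) (u₀ : E N → ℝ) (t : ℝ) (x : E N) : ℝ :=
  if t = 0 then u₀ x else ∫ y, u₀ y * heatKernel N t x y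

/-- `VT N T u` means `u ∈ 𝒱𝒯₁⁺(T)`: `u` is `C²`, in `L¹`, positive, of unit mass, and
`2T·Hess(log u)(x)(v,v) + |v|² ≥ 0` for all `x, v`. -/
def VT (N : ℕ) (T : ℝ) (u : E N → ℝ) : Prop :=
  ContDiff ℝ 2 u ∧ Integrable u volume ∧ (∀ x, 0 < u x) ∧ (∫ x, u x) = 1 ∧
    ∀ x v : E N,
      0 ≤ 2 * T * iteratedFDeriv ℝ 2 (fun y => Real.log (u y)) x ![v, v] + ‖v‖ ^ 2

/-- The Colding–Minicozzi entropy `λ_CM^n[μ]`. -/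
def lamCM {N : ℕ} (n : ℕ) (μ : Measure (E N)) : ℝ≥0∞ :=
  ⨆ (ρ : ℝ) (_ : 0 < ρ) (x₀ : E N),
    ENNReal.ofReal ((4 * Real.pi * ρ) ^ (-(n : ℝ) / 2)) *
      ∫⁻ x, ENNReal.ofReal (Real.exp (-‖x - x₀‖ ^ 2 / (4 * ρ))) ∂μ

/-- The virtual entropy `λ_V^n[μ]`. -/
def lamV {N : ℕ} (n : ℕ) (μ : Measure (E N)) : ℝ≥0∞ :=
  ⨆ (T : ℝ) (_ : 0 < T) (u : E N → ℝ) (_ : VT N T u),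
    ENNReal.ofReal ((4 * Real.pi * T) ^ (((N : ℝ) - n) / 2)) *
      ∫⁻ x, ENNReal.ofReal (u x) ∂μ

/-- The Li–Yau weight `W^M_ρ`, expressed as a function of the squared norm `r2 = |x|²`:
`W^M_ρ(x) = ρ^M (1 + ρ²|x|²/4)^{-M}`. -/
def W (M : ℕ) (ρ r2 : ℝ) : ℝ := ρ ^ M / (1 + ρ ^ 2 * r2 / 4) ^ M

/-- The Li–Yau conformal volume `λ_LY^k[μ]`. -/
def lamLY {N : ℕ} (k : ℕ) (μ : Measure (E N)) : ℝ≥0∞ :=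
  ⨆ (ρ : ℝ) (_ : 0 < ρ) (x₀ : E N), ∫⁻ x, ENNReal.ofReal (W k ρ (‖x - x₀‖ ^ 2)) ∂μ

/-- The `k`-dimensional volume `|𝕊^k|` of the unit `k`-sphere, as the `k`-dimensional
Hausdorff measure of the unit sphere in `ℝ^{k+1}`. -/
def sphereVol (k : ℕ) : ℝ :=
  (μH[(k : ℝ)] (Metric.sphere (0 : EuclideanSpace ℝ (Fin (k + 1))) 1)).toReal

/-- The normalized Li–Yau conformal volume `λ̄_LY^k[μ] = |𝕊^k|⁻¹ λ_LY^k[μ]`. -/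
def lamLYbar {N : ℕ} (k : ℕ) (μ : Measure (E N)) : ℝ≥0∞ :=
  ENNReal.ofReal ((sphereVol k)⁻¹) * lamLY k μ

/-- The Li–Yau conformal volume `λ_LY^k[μ ⊗ L^{2m}]` of the product of `μ` with Lebesgue
measure on `ℝ^{2m}` (the squared Euclidean norm on `ℝ^{N+2m}` of `(y,z)-(y₀,z₀)` is
`|y-y₀|² + |z-z₀|²`). -/
def lamLYProd {N : ℕ} (k : ℕ) (μ : Measure (E N)) (m : ℕ) : ℝ≥0∞ :=
  ⨆ (ρ : ℝ) (_ : 0 < ρ) (y₀ : E N) (z₀ : E (2 * m)),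
    ∫⁻ p : E N × E (2 * m),
      ENNReal.ofReal (W k ρ (‖p.1 - y₀‖ ^ 2 + ‖p.2 - z₀‖ ^ 2)) ∂(μ.prod volume)

/-- The normalized Li–Yau conformal volume `λ̄_LY^k[μ ⊗ L^{2m}]`. -/
def lamLYbarProd {N : ℕ} (k : ℕ) (μ : Measure (E N)) (m : ℕ) : ℝ≥0∞ :=
  ENNReal.ofReal ((sphereVol k)⁻¹) * lamLYProd k μ m

/-- The constant `C_{M,m} = (4π)^m (M+m-1)!/(M+2m-1)!`. -/
def Cconst (M m : ℕ) : ℝ :=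
  (4 * Real.pi) ^ m * (Nat.factorial (M + m - 1) : ℝ) / (Nat.factorial (M + 2 * m - 1) : ℝ)

/-- The modified weight `Ŵ^n_{M,ρ}(x) = (4πρ)^{-n/2} (1 + |x|²/(4Mρ))^{-M}`, as a function
of the squared norm `r2 = |x|²`. -/
def What (n M : ℕ) (ρ r2 : ℝ) : ℝ :=
  (4 * Real.pi * ρ) ^ (-(n : ℝ) / 2) / (1 + r2 / (4 * (M : ℝ) * ρ)) ^ M

/-- The constant `Ĉ_{n,m} = (4π/(n+m))^{n/2} |𝕊^{n+2m}|⁻¹ C_{n,m}`. -/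
def Chat (n m : ℕ) : ℝ :=
  (4 * Real.pi / ((n : ℝ) + m)) ^ ((n : ℝ) / 2) * (sphereVol (n + 2 * m))⁻¹ * Cconst n m

/-!
Taylor expansion of `log u` turns the lower bound on its Hessian into the Harnack inequality
`u(x + v) ≥ u(x) exp(∇log u(x)·v - |v|²/4T)`. Integrating it in `v` and completing the square
gives `u exp(T|∇log u|²) ≤ (4πT)^{-N/2}`, which bounds both `u` and `√T|∇u| = u √T|∇log u|`.
The heat flow preserves sup bounds and Lipschitz constants, hence (i). Adding the Harnack
inequalities for `v` and `-v` shows that `w = u(· + v) + u(· - v) - (2 - |v|²/2T) u` is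
nonnegative. Its mass is `|v|²/2T`, so the flow of `w` lies between `0` and
`(4πt)^{-N/2}|v|²/2T`; this bounds the second differences of the flow of `u`, hence its
Hessian.
-/

section Taylor

open scoped Nat

variable {V : Type*} [NormedAddCommGroup V] [NormedSpace ℝ V] {f : V → ℝ}

lemma iteratedDeriv_comp_add_smul {F : Type*} [NormedAddCommGroup F] [NormedSpace ℝ F]
    {f : V → F} {n : ℕ} (hf : ContDiff ℝ n f) (x v : V) :
    iteratedDeriv n (fun s : ℝ => f (x + s • v)) =
      fun s => iteratedFDeriv ℝ n f (x + s • v) fun _ => v := by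
  induction n with
  | zero => simp
  | succ n ih =>
    rw [iteratedDeriv_succ, ih (hf.of_le (by norm_cast; omega))]
    ext s
    exact ContDiffAt.deriv_fderiv_add_smul (by exact_mod_cast hf.contDiffAt)

theorem exists_map_add_eq_sum_add_iteratedFDeriv {n : ℕ} (hf : ContDiff ℝ (n + 1) f) (x v : V) :
    ∃ s ∈ Set.Ioo (0 : ℝ) 1,
      f (x + v) = ∑ k ∈ Finset.range (n + 1), (k ! : ℝ)⁻¹ * iteratedFDeriv ℝ k f x (fun _ => v) +
        iteratedFDeriv ℝ (n + 1) f (x + s • v) (fun _ => v) / (n + 1)! := by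
  have hline : ContDiff ℝ (n + 1) fun s : ℝ => f (x + s • v) := by fun_prop
  obtain ⟨s, hs, hlagrange⟩ :=
    taylor_mean_remainder_lagrange_iteratedDeriv zero_ne_one hline.contDiffOn
  refine ⟨s, by simpa using hs, ?_⟩
  have hcoeff : ∀ k ∈ Finset.range (n + 1),
      iteratedDerivWithin k (fun s : ℝ => f (x + s • v)) (Set.uIcc 0 1) 0 =
        iteratedFDeriv ℝ k f x fun _ => v := by
    intro k hk
    have hfk : ContDiff ℝ k f := hf.of_le (by exact_mod_cast (Finset.mem_range.1 hk).le)
    rw [iteratedDerivWithin_eq_iteratedDeriv (uniqueDiffOn_uIcc zero_ne_one) (by fun_prop)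
      (by simp), iteratedDeriv_comp_add_smul hfk]
    simp only [zero_smul, add_zero]
  rw [taylor_within_apply, iteratedDeriv_comp_add_smul (by exact_mod_cast hf)] at hlagrange
  simp only [one_smul, sub_zero, one_pow, mul_one, smul_eq_mul] at hlagrange
  rw [← sub_eq_iff_eq_add', ← hlagrange]
  exact congrArg _ (Finset.sum_congr rfl fun k hk => by rw [hcoeff k hk])

theorem isLittleO_map_add_smul_sub_sum_iteratedFDeriv {F : Type*} [NormedAddCommGroup F]
    [NormedSpace ℝ F] {f : V → F} {n : ℕ} (hf : ContDiff ℝ n f) (x v : V) :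
    (fun s : ℝ => f (x + s • v) -
        ∑ k ∈ Finset.range (n + 1), ((k ! : ℝ)⁻¹ * s ^ k) • iteratedFDeriv ℝ k f x fun _ => v)
      =o[𝓝 0] fun s => s ^ n := by
  have hline : ContDiff ℝ n fun s : ℝ => f (x + s • v) := by fun_prop
  refine (taylor_isLittleO_univ (x₀ := 0) hline).congr (fun s => ?_) (fun s => by rw [sub_zero])
  rw [taylor_within_apply]
  refine congrArg _ (Finset.sum_congr rfl fun k hk => ?_)
  have hfk : ContDiff ℝ k f := hf.of_le (by exact_mod_cast Finset.mem_range_succ_iff.1 hk)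
  rw [iteratedDerivWithin_univ, iteratedDeriv_comp_add_smul hfk]
  simp only [sub_zero, zero_smul, add_zero]

theorem tendsto_second_difference_div_sq (hf : ContDiff ℝ 2 f) (x v : V) :
    Tendsto (fun s : ℝ => (f (x + s • v) + f (x - s • v) - 2 * f x) / s ^ 2) (𝓝[≠] 0)
      (𝓝 (iteratedFDeriv ℝ 2 f x fun _ => v)) := by
  have htaylor := isLittleO_map_add_smul_sub_sum_iteratedFDeriv (n := 2) hf x v
  have htaylor_neg := htaylor.comp_tendsto (by simpa using (continuous_neg (G := ℝ)).tendsto 0)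
  have hremainder :
      (fun s : ℝ => f (x + s • v) + f (x - s • v) - 2 * f x -
        s ^ 2 * iteratedFDeriv ℝ 2 f x fun _ => v) =o[𝓝 0] fun s => s ^ 2 := by
    refine (htaylor.add (htaylor_neg.congr_right fun s => neg_sq s)).congr_left fun s => ?_
    simp only [Function.comp_apply, Finset.sum_range_succ, Finset.sum_range_zero, smul_eq_mul,
      iteratedFDeriv_zero_apply, Nat.factorial, neg_smul, ← sub_eq_add_neg]
    push_cast
    ring
  have hlim := (hremainder.tendsto_div_nhds_zero.mono_left
    (nhdsWithin_le_nhds (s := {0}ᶜ))).add_const (iteratedFDeriv ℝ 2 f x fun _ => v)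
  rw [zero_add] at hlim
  refine hlim.congr' (eventually_mem_nhdsWithin.mono fun s hs => ?_)
  rw [sub_div, mul_div_cancel_left₀ _ (pow_ne_zero 2 hs), sub_add_cancel]

end Taylor

section SecondDifference

variable {V : Type*} [NormedAddCommGroup V] [InnerProductSpace ℝ V]

theorem opNorm_le_of_forall_abs_apply_self_le {B : V →L[ℝ] V →L[ℝ] ℝ} {M : ℝ} (hM : 0 ≤ M)
    (hsymm : ∀ v w, B v w = B w v) (hB : ∀ v, |B v v| ≤ M * ‖v‖ ^ 2) : ‖B‖ ≤ M := by
  refine B.opNorm_le_of_unit_norm hM fun v hv => (B v).opNorm_le_of_unit_norm hM fun w hw => ?_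
  have hpolar : 4 * B v w = B (v + w) (v + w) - B (v - w) (v - w) := by
    simp only [map_add, map_sub, add_apply, sub_apply, hsymm w v]
    ring
  have hsum : ‖v + w‖ ^ 2 + ‖v - w‖ ^ 2 = 4 := by
    have := parallelogram_law_with_norm ℝ v w
    rw [hv, hw] at this
    linarith
  have habs : 4 * |B v w| ≤ 4 * M :=
    calc 4 * |B v w| = |B (v + w) (v + w) - B (v - w) (v - w)| := by
          rw [← hpolar, abs_mul, abs_of_pos (by norm_num : (0 : ℝ) < 4)]
      _ ≤ |B (v + w) (v + w)| + |B (v - w) (v - w)| := abs_sub _ _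
      _ ≤ M * ‖v + w‖ ^ 2 + M * ‖v - w‖ ^ 2 := add_le_add (hB _) (hB _)
      _ = 4 * M := by rw [← mul_add, hsum, mul_comm]
  rw [Real.norm_eq_abs]
  linarith

theorem norm_iteratedFDeriv_two_le_of_abs_second_difference_le {f : V → ℝ} {M : ℝ} {x : V}
    (hM : 0 ≤ M) (hf : ContDiff ℝ 2 f)
    (h : ∀ v, |f (x + v) + f (x - v) - 2 * f x| ≤ M * ‖v‖ ^ 2) :
    ‖iteratedFDeriv ℝ 2 f x‖ ≤ M := by
  have hquad (v : V) : |fderiv ℝ (fderiv ℝ f) x v v| ≤ M * ‖v‖ ^ 2 := by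
    have hlim := (tendsto_second_difference_div_sq hf x v).abs
    rw [iteratedFDeriv_two_apply] at hlim
    refine le_of_tendsto hlim (eventually_mem_nhdsWithin.mono fun s hs => ?_)
    have hs2 : 0 < s ^ 2 := sq_pos_of_ne_zero hs
    rw [abs_div, abs_of_pos hs2, div_le_iff₀ hs2]
    calc |f (x + s • v) + f (x - s • v) - 2 * f x| ≤ M * ‖s • v‖ ^ 2 := h _
      _ = M * ‖v‖ ^ 2 * s ^ 2 := by rw [norm_smul, mul_pow, Real.norm_eq_abs, sq_abs]; ring
  rw [← norm_iteratedFDeriv_fderiv, norm_iteratedFDeriv_one]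
  exact opNorm_le_of_forall_abs_apply_self_le hM
    (hf.contDiffAt.isSymmSndFDerivAt (by simp)).eq hquad

end SecondDifference

section Smoothing

universe u

variable {V : Type u} [NormedAddCommGroup V] [MeasurableSpace V] [BorelSpace V]
  [SecondCountableTopology V] {μ : Measure V} {f : V → ℝ}

lemma aestronglyMeasurable_smul_comp_sub {F : Type*} [NormedAddCommGroup F] [NormedSpace ℝ F]
    {g : V → F} (hf : Integrable f μ) (hg : Continuous g) (x : V) :
    AEStronglyMeasurable (fun y => f y • g (x - y)) μ :=
  hf.aestronglyMeasurable.smul (hg.comp (continuous_sub_left x)).aestronglyMeasurable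

lemma continuous_integral_smul_comp_sub {F : Type*} [NormedAddCommGroup F] [NormedSpace ℝ F]
    {g : V → F} {C : ℝ} (hf : Integrable f μ) (hg : Continuous g) (hgC : ∀ x, ‖g x‖ ≤ C) :
    Continuous fun x => ∫ y, f y • g (x - y) ∂μ := by
  refine continuous_of_dominated (bound := fun y => ‖f y‖ * C)
    (aestronglyMeasurable_smul_comp_sub hf hg) (fun x => .of_forall fun y => ?_)
    (hf.norm.mul_const C) (.of_forall fun y => by fun_prop)
  rw [norm_smul]
  gcongr
  exact hgC _

variable [NormedSpace ℝ V]

lemma hasFDerivAt_integral_smul_comp_sub {F : Type*} [NormedAddCommGroup F] [NormedSpace ℝ F]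
    {g : V → F} {C C' : ℝ} (hf : Integrable f μ) (hg : ContDiff ℝ 1 g) (hgC : ∀ x, ‖g x‖ ≤ C)
    (hgC' : ∀ x, ‖fderiv ℝ g x‖ ≤ C') (x : V) :
    HasFDerivAt (fun x => ∫ y, f y • g (x - y) ∂μ) (∫ y, f y • fderiv ℝ g (x - y) ∂μ) x := by
  have hmeas := aestronglyMeasurable_smul_comp_sub hf hg.continuous
  refine hasFDerivAt_integral_of_dominated_of_fderiv_le (bound := fun y => ‖f y‖ * C') univ_mem
    (F' := fun x y => f y • fderiv ℝ g (x - y))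
    (.of_forall hmeas) ((hf.norm.mul_const C).mono' (hmeas x) (.of_forall fun y => ?_))
    (aestronglyMeasurable_smul_comp_sub hf (hg.continuous_fderiv one_ne_zero) x)
    (.of_forall fun y z _ => ?_) (hf.norm.mul_const C') (.of_forall fun y z _ => ?_)
  · rw [norm_smul]
    gcongr
    exact hgC _
  · rw [norm_smul]
    gcongr
    exact hgC' _
  · exact ((hasFDerivAt_comp_sub y).2
      (hg.differentiable one_ne_zero _).hasFDerivAt).const_smul (f y)

-- `F` lives in the universe of `V` because the induction replaces `F` by `V →L[ℝ] F`.
theorem contDiff_integral_smul_comp_sub {F : Type u} [NormedAddCommGroup F] [NormedSpace ℝ F]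
    {g : V → F} {n : ℕ} (hf : Integrable f μ) (hg : ContDiff ℝ n g)
    (hbdd : ∀ k ≤ n, ∃ C, ∀ x, ‖iteratedFDeriv ℝ k g x‖ ≤ C) :
    ContDiff ℝ n fun x => ∫ y, f y • g (x - y) ∂μ := by
  obtain ⟨C, hC⟩ := hbdd 0 (Nat.zero_le n)
  simp only [norm_iteratedFDeriv_zero] at hC
  induction n generalizing F C with
  | zero =>
    exact contDiff_zero.2 (continuous_integral_smul_comp_sub hf hg.continuous hC)
  | succ n ih =>
    obtain ⟨C', hC'⟩ := hbdd 1 (by omega)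
    simp only [norm_iteratedFDeriv_one] at hC'
    have hbdd' : ∀ k ≤ n, ∃ C, ∀ x, ‖iteratedFDeriv ℝ k (fderiv ℝ g) x‖ ≤ C := by
      simpa only [norm_iteratedFDeriv_fderiv] using fun k hk => hbdd (k + 1) (by omega)
    rw [Nat.cast_add, Nat.cast_one] at hg ⊢
    exact contDiff_succ_iff_hasFDerivAt.2 ⟨_, ih (hg.fderiv_right le_rfl) hbdd' C' hC',
      hasFDerivAt_integral_smul_comp_sub hf (hg.of_le (by simp)) hC hC'⟩

end Smoothing

section Gaussian

open scoped Nat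

lemma one_add_pow_mul_exp_neg_mul_sq_le {b r : ℝ} (hb : 0 < b) (hr : 0 ≤ r) (m : ℕ) :
    (1 + r) ^ m * Real.exp (-b * r ^ 2) ≤ m ! * Real.exp (1 + 1 / (4 * b)) := by
  have hpow : (1 + r) ^ m ≤ m ! * Real.exp (1 + r) := by
    have := Real.pow_div_factorial_le_exp (1 + r) (by positivity : 0 ≤ 1 + r) m
    rwa [div_le_iff₀' (by positivity)] at this
  have hexponent : 1 + r + -b * r ^ 2 ≤ 1 + 1 / (4 * b) := by
    have : 1 / (4 * b) - r + b * r ^ 2 = (1 - 2 * b * r) ^ 2 / (4 * b) := by field_simp; ring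
    have : 0 ≤ (1 - 2 * b * r) ^ 2 / (4 * b) := by positivity
    linarith
  calc (1 + r) ^ m * Real.exp (-b * r ^ 2)
      ≤ m ! * Real.exp (1 + r) * Real.exp (-b * r ^ 2) := by gcongr
    _ = m ! * Real.exp (1 + r + -b * r ^ 2) := by rw [mul_assoc, ← Real.exp_add]
    _ ≤ m ! * Real.exp (1 + 1 / (4 * b)) := by gcongr

theorem exists_norm_iteratedFDeriv_exp_neg_mul_sq_norm_le {V : Type*} [NormedAddCommGroup V]
    [InnerProductSpace ℝ V] {b : ℝ} (hb : 0 < b) (n : ℕ) :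
    ∃ C, ∀ x : V, ‖iteratedFDeriv ℝ n (fun x : V => Real.exp (-b * ‖x‖ ^ 2)) x‖ ≤ C := by
  have hgrowth : (fun x : V => -b * ‖x‖ ^ 2).HasTemperateGrowth := by fun_prop
  obtain ⟨k, C, hC0, hC⟩ := hgrowth.norm_iteratedFDeriv_le_uniform n
  refine ⟨n ! * (1 + C) ^ n * ((k * n)! * Real.exp (1 + 1 / (4 * b))), fun x => ?_⟩
  have hD_ge_one : 1 ≤ (1 + C) * (1 + ‖x‖) ^ k :=
    one_le_mul_of_one_le_of_one_le (by linarith) (one_le_pow₀ (by linarith [norm_nonneg x]))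
  have hinner (i : ℕ) (hi : 1 ≤ i) (hin : i ≤ n) :
      ‖iteratedFDeriv ℝ i (fun x : V => -b * ‖x‖ ^ 2) x‖ ≤ ((1 + C) * (1 + ‖x‖) ^ k) ^ i :=
    calc _ ≤ C * (1 + ‖x‖) ^ k := hC i hin x
      _ ≤ (1 + C) * (1 + ‖x‖) ^ k := by gcongr; linarith
      _ ≤ _ := le_self_pow₀ hD_ge_one (by omega)
  have hexp (i : ℕ) (_ : i ≤ n) :
      ‖iteratedFDeriv ℝ i Real.exp (-b * ‖x‖ ^ 2)‖ ≤ Real.exp (-b * ‖x‖ ^ 2) := by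
    rw [norm_iteratedFDeriv_eq_norm_iteratedDeriv, iteratedDeriv_eq_iterate, Real.iter_deriv_exp,
      Real.norm_of_nonneg (Real.exp_pos _).le]
  calc _ ≤ n ! * Real.exp (-b * ‖x‖ ^ 2) * ((1 + C) * (1 + ‖x‖) ^ k) ^ n :=
        norm_iteratedFDeriv_comp_le Real.contDiff_exp hgrowth.1 (by exact_mod_cast le_top) x
          hexp hinner
    _ = n ! * (1 + C) ^ n * ((1 + ‖x‖) ^ (k * n) * Real.exp (-b * ‖x‖ ^ 2)) := by
        rw [mul_pow, ← pow_mul]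
        ring
    _ ≤ _ := mul_le_mul_of_nonneg_left
        (one_add_pow_mul_exp_neg_mul_sq_le hb (norm_nonneg x) _) (by positivity)

end Gaussian

section HeatFlow

variable {N : ℕ} {t : ℝ} {u w : E N → ℝ}

lemma heatKernel_eq (N : ℕ) (t : ℝ) (x y : E N) :
    heatKernel N t x y =
      (4 * Real.pi * t) ^ (-(N : ℝ) / 2) * Real.exp (-(4 * t)⁻¹ * ‖x - y‖ ^ 2) := by
  rw [heatKernel, neg_mul, inv_mul_eq_div, neg_div (4 * t)]

lemma heatKernel_add_add (x y h : E N) : heatKernel N t (x + h) (y + h) = heatKernel N t x y := by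
  rw [heatKernel, heatKernel, add_sub_add_right_eq_sub]

lemma continuous_heatKernel (N : ℕ) (t : ℝ) (x : E N) : Continuous (heatKernel N t x) := by
  unfold heatKernel
  fun_prop

lemma heatKernel_nonneg (ht : 0 ≤ t) (x y : E N) : 0 ≤ heatKernel N t x y := by
  unfold heatKernel
  positivity

lemma heatKernel_le (ht : 0 ≤ t) (x y : E N) :
    heatKernel N t x y ≤ (4 * Real.pi * t) ^ (-(N : ℝ) / 2) := by
  rw [heatKernel_eq]
  refine mul_le_of_le_one_right (by positivity) (Real.exp_le_one_iff.2 ?_)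
  rw [neg_mul, neg_nonpos]
  positivity

theorem integral_heatKernel (ht : 0 < t) (x : E N) : ∫ y, heatKernel N t x y = 1 := by
  have hvariance : Real.pi / (4 * t)⁻¹ = 4 * Real.pi * t := by field_simp
  simp_rw [heatKernel_eq]
  rw [integral_const_mul, integral_sub_left_eq_self fun z : E N => Real.exp (-(4 * t)⁻¹ * ‖z‖ ^ 2),
    GaussianFourier.integral_rexp_neg_mul_sq_norm (by positivity), finrank_euclideanSpace_fin,
    hvariance, ← Real.rpow_add (by positivity), neg_div, neg_add_cancel, Real.rpow_zero]

lemma integrable_heatKernel (ht : 0 < t) (x : E N) : Integrable (heatKernel N t x) :=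
  .of_integral_ne_zero (by simp [integral_heatKernel ht])

lemma integrable_mul_heatKernel (hu : Integrable u) (ht : 0 ≤ t) (x : E N) :
    Integrable fun y => u y * heatKernel N t x y :=
  hu.mul_bdd (continuous_heatKernel N t x).aestronglyMeasurable <| .of_forall fun y =>
    (Real.norm_of_nonneg (heatKernel_nonneg ht x y)).trans_le (heatKernel_le ht x y)

@[simp]
lemma heatFlow_zero (u : E N → ℝ) : heatFlow N u 0 = u := by
  ext x
  exact if_pos rfl

lemma heatFlow_of_pos (u : E N → ℝ) (ht : 0 < t) (x : E N) :
    heatFlow N u t x = ∫ y, u y * heatKernel N t x y :=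
  if_neg ht.ne'

lemma heatFlow_comp_add_right (u : E N → ℝ) (ht : 0 ≤ t) (x h : E N) :
    heatFlow N (fun y => u (y + h)) t x = heatFlow N u t (x + h) := by
  obtain rfl | ht := ht.eq_or_lt
  · simp
  rw [heatFlow_of_pos _ ht, heatFlow_of_pos _ ht,
    ← integral_add_right_eq_self (fun y => u y * heatKernel N t (x + h) y) h]
  simp_rw [heatKernel_add_add]

lemma heatFlow_add (hu : Integrable u) (hw : Integrable w) (ht : 0 ≤ t) (x : E N) :
    heatFlow N (fun y => u y + w y) t x = heatFlow N u t x + heatFlow N w t x := by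
  obtain rfl | ht' := ht.eq_or_lt
  · simp
  simp_rw [heatFlow_of_pos _ ht', add_mul]
  exact integral_add (integrable_mul_heatKernel hu ht x) (integrable_mul_heatKernel hw ht x)

lemma heatFlow_const_mul (c : ℝ) (u : E N → ℝ) (t : ℝ) (x : E N) :
    heatFlow N (fun y => c * u y) t x = c * heatFlow N u t x := by
  unfold heatFlow
  split_ifs
  · rfl
  · simp_rw [mul_assoc, integral_const_mul]

lemma heatFlow_sub (hu : Integrable u) (hw : Integrable w) (ht : 0 ≤ t) (x : E N) :
    heatFlow N (fun y => u y - w y) t x = heatFlow N u t x - heatFlow N w t x := by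
  have hadd := heatFlow_add hu (hw.const_mul (-1)) ht x
  rw [heatFlow_const_mul] at hadd
  simpa only [neg_one_mul, ← sub_eq_add_neg] using hadd

lemma heatFlow_nonneg (hu : ∀ x, 0 ≤ u x) (ht : 0 ≤ t) (x : E N) : 0 ≤ heatFlow N u t x := by
  obtain rfl | ht' := ht.eq_or_lt
  · simpa using hu x
  rw [heatFlow_of_pos _ ht']
  exact integral_nonneg fun y => mul_nonneg (hu y) (heatKernel_nonneg ht x y)

theorem abs_heatFlow_le {C : ℝ} (hu : ∀ x, |u x| ≤ C) (ht : 0 ≤ t) (x : E N) :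
    |heatFlow N u t x| ≤ C := by
  obtain rfl | ht' := ht.eq_or_lt
  · simpa using hu x
  rw [heatFlow_of_pos _ ht', ← mul_one C, ← integral_heatKernel ht' x, ← integral_const_mul]
  refine norm_integral_le_of_norm_le (f := fun y => u y * heatKernel N t x y)
    ((integrable_heatKernel ht' x).const_mul C) (.of_forall fun y => ?_)
  rw [norm_mul, Real.norm_of_nonneg (heatKernel_nonneg ht x y)]
  exact mul_le_mul_of_nonneg_right (hu y) (heatKernel_nonneg ht x y)

theorem heatFlow_le_mul_integral (hint : Integrable u) (hu : ∀ x, 0 ≤ u x) (ht : 0 < t)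
    (x : E N) : heatFlow N u t x ≤ (4 * Real.pi * t) ^ (-(N : ℝ) / 2) * ∫ y, u y := by
  rw [heatFlow_of_pos _ ht, mul_comm, ← integral_mul_const]
  exact integral_mono (integrable_mul_heatKernel hint ht.le x) (hint.mul_const _) fun y =>
    mul_le_mul_of_nonneg_left (heatKernel_le ht.le x y) (hu y)

theorem lipschitzWith_heatFlow {K : ℝ≥0} (hlip : LipschitzWith K u) (hu : Integrable u)
    (ht : 0 ≤ t) : LipschitzWith K (heatFlow N u t) := by
  refine .of_dist_le_mul fun x y => ?_
  have hdiff : heatFlow N (fun z => u (z + (x - y)) - u z) t y =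
      heatFlow N u t x - heatFlow N u t y := by
    rw [heatFlow_sub (hu.comp_add_right _) hu ht, heatFlow_comp_add_right u ht, add_sub_cancel]
  rw [Real.dist_eq, ← hdiff]
  refine abs_heatFlow_le (fun z => ?_) ht y
  simpa [Real.dist_eq, dist_eq_norm] using hlip.dist_le_mul (z + (x - y)) z

theorem abs_heatFlow_second_difference_le {c : ℝ} {v : E N} (hint : Integrable u)
    (hu : ∀ x, 0 ≤ u x) (hc : 0 ≤ c) (hdiff : ∀ x, (2 - c) * u x ≤ u (x + v) + u (x - v))
    (ht : 0 < t) (x : E N) :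
    |heatFlow N u t (x + v) + heatFlow N u t (x - v) - 2 * heatFlow N u t x| ≤
      (4 * Real.pi * t) ^ (-(N : ℝ) / 2) * (c * ∫ y, u y) := by
  set w : E N → ℝ := fun y => u (y + v) + u (y + -v) - (2 - c) * u y
  have hforward : Integrable fun y => u (y + v) := hint.comp_add_right v
  have hbackward : Integrable fun y => u (y + -v) := hint.comp_add_right (-v)
  have hsum : Integrable fun y => u (y + v) + u (y + -v) := hforward.add hbackward
  have hcenter : Integrable fun y => (2 - c) * u y := hint.const_mul _
  have hw_int : Integrable w := hsum.sub hcenter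
  have hw_nonneg (y : E N) : 0 ≤ w y := by
    simpa only [w, ← sub_eq_add_neg, sub_nonneg] using hdiff y
  have hw_mass : ∫ y, w y = c * ∫ y, u y := by
    rw [integral_sub hsum hcenter, integral_add hforward hbackward, integral_add_right_eq_self,
      integral_add_right_eq_self, integral_const_mul]
    ring
  have hw_flow : heatFlow N w t x = heatFlow N u t (x + v) + heatFlow N u t (x - v) -
      (2 - c) * heatFlow N u t x := by
    rw [heatFlow_sub hsum hcenter ht.le, heatFlow_add hforward hbackward ht.le,
      heatFlow_comp_add_right u ht.le, heatFlow_comp_add_right u ht.le, heatFlow_const_mul,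
      ← sub_eq_add_neg]
  have hw_lower := heatFlow_nonneg hw_nonneg ht.le x
  have hw_upper := heatFlow_le_mul_integral hw_int hw_nonneg ht x
  have hu_lower := mul_nonneg hc (heatFlow_nonneg hu ht.le x)
  have hu_upper := mul_le_mul_of_nonneg_left (heatFlow_le_mul_integral hint hu ht x) hc
  rw [hw_mass] at hw_upper
  rw [abs_le]
  constructor <;> linarith

theorem contDiff_heatFlow (hu : Integrable u) (ht : 0 < t) (n : ℕ) :
    ContDiff ℝ n (heatFlow N u t) := by
  have hflow : heatFlow N u t = fun x => (4 * Real.pi * t) ^ (-(N : ℝ) / 2) *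
      ∫ y, u y • Real.exp (-(4 * t)⁻¹ * ‖x - y‖ ^ 2) := by
    ext x
    rw [heatFlow_of_pos _ ht, ← integral_const_mul]
    simp_rw [heatKernel_eq, smul_eq_mul, mul_left_comm]
  have hgaussian : ContDiff ℝ n fun z : E N => Real.exp (-(4 * t)⁻¹ * ‖z‖ ^ 2) :=
    (contDiff_const.mul (contDiff_norm_sq ℝ)).exp
  rw [hflow]
  exact contDiff_const.mul <| contDiff_integral_smul_comp_sub hu hgaussian fun k _ =>
    exists_norm_iteratedFDeriv_exp_neg_mul_sq_norm_le (by positivity) k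

end HeatFlow

namespace VT

variable {N : ℕ} {T t : ℝ} {u : E N → ℝ}

lemma contDiff (hu : VT N T u) : ContDiff ℝ 2 u := hu.1

lemma integrable (hu : VT N T u) : Integrable u := hu.2.1

lemma pos (hu : VT N T u) (x : E N) : 0 < u x := hu.2.2.1 x

lemma integral_eq_one (hu : VT N T u) : ∫ x, u x = 1 := hu.2.2.2.1

lemma neg_sq_norm_div_le_iteratedFDeriv_log (hu : VT N T u) (hT : 0 < T) (x v : E N) :
    -(‖v‖ ^ 2 / (2 * T)) ≤ iteratedFDeriv ℝ 2 (fun y => Real.log (u y)) x fun _ => v := by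
  have hhess := hu.2.2.2.2 x v
  have hvec : ![v, v] = fun _ => v := by
    ext i : 1
    fin_cases i <;> rfl
  rw [hvec] at hhess
  rw [← neg_div, div_le_iff₀ (by positivity)]
  linarith

theorem log_add_fderiv_sub_le (hu : VT N T u) (hT : 0 < T) (x v : E N) :
    Real.log (u x) + fderiv ℝ (fun y => Real.log (u y)) x v - ‖v‖ ^ 2 / (4 * T) ≤
      Real.log (u (x + v)) := by
  have hlog : ContDiff ℝ 2 fun y => Real.log (u y) := hu.contDiff.log fun y => (hu.pos y).ne'
  obtain ⟨s, -, hlagrange⟩ :=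
    exists_map_add_eq_sum_add_iteratedFDeriv (n := 1) (by exact_mod_cast hlog) x v
  have htaylor : Real.log (u (x + v)) = Real.log (u x) + fderiv ℝ (fun y => Real.log (u y)) x v +
      (iteratedFDeriv ℝ 2 (fun y => Real.log (u y)) (x + s • v) fun _ => v) / 2 := by
    simpa [Finset.sum_range_succ, iteratedFDeriv_one_apply] using hlagrange
  have hhess := hu.neg_sq_norm_div_le_iteratedFDeriv_log hT (x + s • v) v
  have hhalf : ‖v‖ ^ 2 / (4 * T) = ‖v‖ ^ 2 / (2 * T) / 2 := by field_simp; norm_num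
  rw [htaylor, hhalf]
  linarith

theorem mul_exp_fderiv_log_sub_le (hu : VT N T u) (hT : 0 < T) (x v : E N) :
    u x * Real.exp (fderiv ℝ (fun y => Real.log (u y)) x v - ‖v‖ ^ 2 / (4 * T)) ≤ u (x + v) := by
  rw [← Real.log_le_log_iff (mul_pos (hu.pos x) (Real.exp_pos _)) (hu.pos _),
    Real.log_mul (hu.pos x).ne' (Real.exp_pos _).ne', Real.log_exp, ← add_sub_assoc]
  exact hu.log_add_fderiv_sub_le hT x v

theorem mul_exp_mul_sq_norm_gradient_log_le (hu : VT N T u) (hT : 0 < T) (x : E N) :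
    u x * Real.exp (T * ‖gradient (fun y => Real.log (u y)) x‖ ^ 2) ≤
      (4 * Real.pi * T) ^ (-(N : ℝ) / 2) := by
  set p := gradient (fun y => Real.log (u y)) x with hp
  -- Completing the square in `v`; the maximum is at `v = 2Tp`.
  have hsquare (v : E N) : T * ‖p‖ ^ 2 + -‖(2 * T) • p - v‖ ^ 2 / (4 * T) =
      fderiv ℝ (fun y => Real.log (u y)) x v - ‖v‖ ^ 2 / (4 * T) := by
    rw [norm_sub_sq_real, norm_smul, real_inner_smul_left, hp, inner_gradient_left,
      Real.norm_of_nonneg (by positivity)]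
    field_simp
    ring
  have hharnack (v : E N) : u x * Real.exp (T * ‖p‖ ^ 2) * heatKernel N T ((2 * T) • p) v ≤
      (4 * Real.pi * T) ^ (-(N : ℝ) / 2) * u (x + v) :=
    calc _ = (4 * Real.pi * T) ^ (-(N : ℝ) / 2) *
          (u x * Real.exp (fderiv ℝ (fun y => Real.log (u y)) x v - ‖v‖ ^ 2 / (4 * T))) := by
          rw [← hsquare, Real.exp_add, heatKernel]
          ring
      _ ≤ _ := by
          gcongr
          exact hu.mul_exp_fderiv_log_sub_le hT x v
  have hintegral := integral_mono ((integrable_heatKernel hT _).const_mul _)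
    ((hu.integrable.comp_add_left x).const_mul _) hharnack
  simpa only [integral_const_mul, integral_heatKernel hT, integral_add_left_eq_self,
    hu.integral_eq_one, mul_one] using hintegral

theorem apply_le (hu : VT N T u) (hT : 0 < T) (x : E N) :
    u x ≤ (4 * Real.pi * T) ^ (-(N : ℝ) / 2) :=
  (le_mul_of_one_le_right (hu.pos x).le (Real.one_le_exp (by positivity))).trans
    (hu.mul_exp_mul_sq_norm_gradient_log_le hT x)

theorem sqrt_mul_norm_fderiv_le (hu : VT N T u) (hT : 0 < T) (x : E N) :
    √T * ‖fderiv ℝ u x‖ ≤ (4 * Real.pi * T) ^ (-(N : ℝ) / 2) := by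
  set p := gradient (fun y => Real.log (u y)) x with hp
  have hnorm : ‖fderiv ℝ u x‖ = u x * ‖p‖ := by
    have hlog := fderiv.log (hu.contDiff.differentiable two_ne_zero x) (hu.pos x).ne'
    rw [hp, gradient, LinearIsometryEquiv.norm_map, hlog, norm_smul, norm_inv,
      Real.norm_of_nonneg (hu.pos x).le, mul_inv_cancel_left₀ (hu.pos x).ne']
  have hexp : √T * ‖p‖ ≤ Real.exp (T * ‖p‖ ^ 2) :=
    calc √T * ‖p‖ ≤ (√T * ‖p‖) ^ 2 + 1 := by
          nlinarith [sq_nonneg (√T * ‖p‖ - 1), sq_nonneg (√T * ‖p‖)]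
      _ ≤ Real.exp ((√T * ‖p‖) ^ 2) := Real.add_one_le_exp _
      _ = Real.exp (T * ‖p‖ ^ 2) := by rw [mul_pow, Real.sq_sqrt hT.le]
  calc √T * ‖fderiv ℝ u x‖ = u x * (√T * ‖p‖) := by rw [hnorm, mul_left_comm]
    _ ≤ u x * Real.exp (T * ‖p‖ ^ 2) := mul_le_mul_of_nonneg_left hexp (hu.pos x).le
    _ ≤ _ := hu.mul_exp_mul_sq_norm_gradient_log_le hT x

theorem two_sub_mul_le_add (hu : VT N T u) (hT : 0 < T) (x v : E N) :
    (2 - ‖v‖ ^ 2 / (2 * T)) * u x ≤ u (x + v) + u (x - v) := by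
  set a := fderiv ℝ (fun y => Real.log (u y)) x v
  set q := ‖v‖ ^ 2 / (4 * T) with hq
  have hforward : u x * Real.exp (a - q) ≤ u (x + v) := hu.mul_exp_fderiv_log_sub_le hT x v
  have hbackward : u x * Real.exp (-a - q) ≤ u (x - v) := by
    simpa only [map_neg, norm_neg, ← sub_eq_add_neg] using hu.mul_exp_fderiv_log_sub_le hT x (-v)
  calc (2 - ‖v‖ ^ 2 / (2 * T)) * u x = 2 * u x * (-q + 1) := by rw [hq]; field_simp; ring
    _ ≤ 2 * u x * (Real.exp (-q) * Real.cosh a) := by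
        have := hu.pos x
        gcongr
        exact (Real.add_one_le_exp (-q)).trans
          (le_mul_of_one_le_right (Real.exp_pos _).le (Real.one_le_cosh a))
    _ = u x * Real.exp (a - q) + u x * Real.exp (-a - q) := by
        rw [Real.cosh_eq, sub_eq_add_neg, sub_eq_add_neg, Real.exp_add, Real.exp_add]
        ring
    _ ≤ u (x + v) + u (x - v) := add_le_add hforward hbackward

theorem heatFlow_le (hu : VT N T u) (hT : 0 < T) (ht : 0 ≤ t) (x : E N) :
    heatFlow N u t x ≤ (4 * Real.pi * T) ^ (-(N : ℝ) / 2) :=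
  (le_abs_self _).trans <| abs_heatFlow_le
    (fun y => (abs_of_pos (hu.pos y)).trans_le (hu.apply_le hT y)) ht x

theorem sqrt_mul_norm_fderiv_heatFlow_le (hu : VT N T u) (hT : 0 < T) (ht : 0 ≤ t) (x : E N) :
    √T * ‖fderiv ℝ (heatFlow N u t) x‖ ≤ (4 * Real.pi * T) ^ (-(N : ℝ) / 2) := by
  set K : ℝ≥0 := ⟨(4 * Real.pi * T) ^ (-(N : ℝ) / 2) / √T, by positivity⟩
  have hlip : LipschitzWith K u :=
    lipschitzWith_of_nnnorm_fderiv_le (hu.contDiff.differentiable two_ne_zero) fun y =>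
      (le_div_iff₀' (Real.sqrt_pos.2 hT)).2 (hu.sqrt_mul_norm_fderiv_le hT y)
  exact (le_div_iff₀' (Real.sqrt_pos.2 hT)).1
    (norm_fderiv_le_of_lipschitz ℝ (lipschitzWith_heatFlow hlip hu.integrable ht))

theorem norm_iteratedFDeriv_two_heatFlow_le (hu : VT N T u) (hT : 0 < T) (ht : 0 < t) (x : E N) :
    ‖iteratedFDeriv ℝ 2 (heatFlow N u t) x‖ ≤ (4 * Real.pi * t) ^ (-(N : ℝ) / 2) / (2 * T) := by
  refine norm_iteratedFDeriv_two_le_of_abs_second_difference_le (by positivity)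
    (contDiff_heatFlow hu.integrable ht 2) fun v => ?_
  rw [div_mul_eq_mul_div, mul_div_assoc]
  simpa only [hu.integral_eq_one, mul_one] using
    abs_heatFlow_second_difference_le hu.integrable (fun y => (hu.pos y).le) (by positivity)
      (fun y => hu.two_sub_mul_le_add hT y v) ht x

end VT

/-- there is `C₂ = C₂(N) > 0` so that for `u₀ ∈ 𝒱𝒯₁⁺(τ₀)` and its heat flow
`U(t,·) = H_t u₀`: (i) `U + √τ₀ |∇U| ≤ C₂ τ₀^{-N/2}` for all `t ≥ 0`, and
(ii) `|∇²U(t,·)| ≤ C₂ τ₀⁻¹ t^{-N/2}` for all `t > 0`. -/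
theorem statement_6 (N : ℕ) (hN : 1 ≤ N) :
    ∃ C₂ : ℝ, 0 < C₂ ∧
      ∀ τ₀ : ℝ, 0 < τ₀ → ∀ u₀ : E N → ℝ, VT N τ₀ u₀ →
        (∀ t : ℝ, 0 ≤ t → ∀ x : E N,
          heatFlow N u₀ t x + Real.sqrt τ₀ * ‖gradient (heatFlow N u₀ t) x‖ ≤
            C₂ * τ₀ ^ (-(N : ℝ) / 2)) ∧
        (∀ t : ℝ, 0 < t → ∀ x : E N,
          ‖iteratedFDeriv ℝ 2 (heatFlow N u₀ t) x‖ ≤ C₂ * τ₀⁻¹ * t ^ (-(N : ℝ) / 2)) := by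
  set A : ℝ := (4 * Real.pi) ^ (-(N : ℝ) / 2)
  have hA (s : ℝ) (hs : 0 < s) : (4 * Real.pi * s) ^ (-(N : ℝ) / 2) = A * s ^ (-(N : ℝ) / 2) :=
    Real.mul_rpow (by positivity) hs.le
  refine ⟨2 * A, by positivity, fun τ₀ hτ₀ u₀ hu₀ => ⟨fun t ht x => ?_, fun t ht x => ?_⟩⟩
  · have hvalue := hu₀.heatFlow_le hτ₀ ht x
    have hgradient := hu₀.sqrt_mul_norm_fderiv_heatFlow_le hτ₀ ht x
    rw [hA τ₀ hτ₀] at hvalue hgradient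
    rw [gradient, LinearIsometryEquiv.norm_map]
    linarith
  · calc ‖iteratedFDeriv ℝ 2 (heatFlow N u₀ t) x‖
        ≤ (4 * Real.pi * t) ^ (-(N : ℝ) / 2) / (2 * τ₀) :=
          hu₀.norm_iteratedFDeriv_two_heatFlow_le hτ₀ ht x
      _ = 2⁻¹ * (A * τ₀⁻¹ * t ^ (-(N : ℝ) / 2)) := by rw [hA t ht]; field_simp
      _ ≤ 2 * A * τ₀⁻¹ * t ^ (-(N : ℝ) / 2) := by
          have : 0 ≤ A * τ₀⁻¹ * t ^ (-(N : ℝ) / 2) := by positivity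
          linarith
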